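/- Let S be a nonempty bounded subset of ℝ³ and for ε > 0 set Θ_ε = {x ∈ ℝ³ : dist(x,S) < ε}. Let R > 1 be such that Θ₁ is contained in the ball of radius R centered at the origin. Then for every δ ∈ (0,1] and every α < 0 satisfying 3(1-α)² ≤ 2(-α)³, one has ∫_{ℝ³∖Θ_δ} e^{α·dist(x,S)} dx ≤ (32π/3) R³ (e^{αR} + e^{αδ}). -/

import Mathlib

open MeasureTheory Metric Real

lemma aux_deriv (a R y : ℝ) (ha : 0 < a) :
    HasDerivAt (fun y : ℝ => -((y ^ 2 / a + 2 * y / a ^ 2 + 2 / a ^ 3) * Real.exp (-a * (y - R))))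
      (y ^ 2 * Real.exp (-a * (y - R))) y := by
  have h1 : HasDerivAt (fun y : ℝ => Real.exp (-a * (y - R)))
      (Real.exp (-a * (y - R)) * (-a * 1)) y :=
    (((hasDerivAt_id y).sub_const R).const_mul (-a)).exp
  have h2 : HasDerivAt (fun y : ℝ => y ^ 2 / a + 2 * y / a ^ 2 + 2 / a ^ 3)
      ((2 * y) / a + 2 * 1 / a ^ 2) y := by
    have := ((((hasDerivAt_id y).pow 2).div_const a).add
      (((hasDerivAt_id y).const_mul 2).div_const (a ^ 2))).add_const (2 / a ^ 3)
    refine HasDerivAt.congr_deriv this ?_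
    simp
  refine HasDerivAt.congr_deriv (h2.mul h1).neg ?_
  field_simp
  ring

lemma aux_tendsto (a R : ℝ) (ha : 0 < a) :
    Filter.Tendsto (fun y : ℝ => -((y ^ 2 / a + 2 * y / a ^ 2 + 2 / a ^ 3) * Real.exp (-a * (y - R))))
      Filter.atTop (nhds 0) := by
  have hm : Filter.Tendsto (fun y : ℝ => a * y) Filter.atTop Filter.atTop :=
    Filter.tendsto_id.const_mul_atTop ha
  have h2 := (Real.tendsto_pow_mul_exp_neg_atTop_nhds_zero 2).comp hm
  have h1 := (Real.tendsto_pow_mul_exp_neg_atTop_nhds_zero 1).comp hm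
  have h0 := (Real.tendsto_pow_mul_exp_neg_atTop_nhds_zero 0).comp hm
  have := ((h2.add (h1.const_mul 2)).add (h0.const_mul 2)).const_mul (-(Real.exp (a * R) / a ^ 3))
  simp only [add_zero, mul_zero] at this
  refine this.congr fun y => ?_
  have : Real.exp (-a * (y - R)) = Real.exp (a * R) * Real.exp (-(a * y)) := by
    rw [← Real.exp_add]; ring_nf
  rw [this]
  simp only [Function.comp]
  field_simp

theorem stmt_4
    (S : Set (EuclideanSpace ℝ (Fin 3)))
    (hS : S.Nonempty) (hSbdd : Bornology.IsBounded S)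
    (Θ : ℝ → Set (EuclideanSpace ℝ (Fin 3)))
    (hΘ : ∀ ε, Θ ε = {x | infDist x S < ε})
    (R : ℝ) (hR : 1 < R) (hΘR : Θ 1 ⊆ Metric.ball (0 : EuclideanSpace ℝ (Fin 3)) R)
    (δ : ℝ) (hδ : δ ∈ Set.Ioc (0 : ℝ) 1) (α : ℝ) (hα : α < 0)
    (hα' : 3 * (1 - α) ^ 2 ≤ 2 * (-α) ^ 3) :
    ∫ x in (Θ δ)ᶜ, Real.exp (α * infDist x S) ≤
      (32 * π / 3) * R ^ 3 * (Real.exp (α * R) + Real.exp (α * δ)) := by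
  obtain ⟨a, rfl⟩ : ∃ a, α = -a := ⟨-α, by ring⟩
  have ha : 0 < a := by linarith
  simp only [sub_neg_eq_add, neg_neg] at hα'
  have hdist : ∀ x, ‖x‖ - R ≤ infDist x S := by
    intro x
    refine (le_infDist hS).2 fun y hy => ?_
    have hy' : y ∈ Θ 1 := by
      rw [hΘ]; simp [infDist_zero_of_mem hy]
    have h1 := hΘR hy'
    rw [mem_ball_zero_iff] at h1
    have h2 : ‖x‖ - ‖y‖ ≤ dist x y := by rw [dist_eq_norm]; exact norm_sub_norm_le x y
    linarith
  have hmeas : MeasurableSet (Θ δ)ᶜ := by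
    rw [hΘ]
    exact (measurableSet_lt (continuous_infDist_pt S).measurable measurable_const).compl
  set G : ℝ → ℝ := (Set.Ioi (2 * R)).indicator (fun r => Real.exp (-a * (r - R))) with hG
  set H : EuclideanSpace ℝ (Fin 3) → ℝ :=
    (closedBall 0 (2 * R)).indicator (fun _ => Real.exp (-a * δ)) with hH
  have hGn : ∀ r, 0 ≤ G r := fun r => Set.indicator_nonneg (fun _ _ => (Real.exp_pos _).le) r
  have hHn : ∀ r, 0 ≤ H r := fun r => Set.indicator_nonneg (fun _ _ => (Real.exp_pos _).le) r
  have hnn : ∀ y ∈ Set.Ioi (2 * R), 0 ≤ y ^ 2 * Real.exp (-a * (y - R)) :=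
    fun y _ => by positivity
  have hind : ∀ y : ℝ, y ^ 2 • G y =
      (Set.Ioi (2 * R)).indicator (fun r => r ^ 2 * Real.exp (-a * (r - R))) y := by
    intro y
    simp only [hG, Set.indicator]
    split_ifs <;> simp
  have hII : Set.Ioi (0:ℝ) ∩ Set.Ioi (2 * R) = Set.Ioi (2 * R) :=
    Set.inter_eq_right.2 (Set.Ioi_subset_Ioi (by linarith))
  have hint : IntegrableOn (fun r : ℝ => r ^ 2 * Real.exp (-a * (r - R))) (Set.Ioi (2 * R)) :=
    integrableOn_Ioi_deriv_of_nonneg' (fun y _ => aux_deriv a R y ha) hnn (aux_tendsto a R ha)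
  have hval := integral_Ioi_of_hasDerivAt_of_nonneg' (fun y (_ : y ∈ Set.Ici (2 * R)) => aux_deriv a R y ha)
    hnn (aux_tendsto a R ha)
  have hGi : Integrable (fun x : EuclideanSpace ℝ (Fin 3) => G ‖x‖) := by
    rw [integrable_fun_norm_addHaar]
    simp only [finrank_euclideanSpace, Fintype.card_fin, Nat.add_one_sub_one, hind]
    rw [integrableOn_indicator_iff measurableSet_Ioi, Set.inter_comm, hII]
    exact hint
  have hGv := integral_fun_norm_addHaar (volume : Measure (EuclideanSpace ℝ (Fin 3))) G
  simp only [finrank_euclideanSpace, Fintype.card_fin, Nat.add_one_sub_one, hind] at hGv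
  rw [setIntegral_indicator measurableSet_Ioi, hII, hval] at hGv
  have hHi : Integrable H := by
    rw [hH, integrable_indicator_iff measurableSet_closedBall]
    exact integrableOn_const (measure_closedBall_lt_top).ne
  have hb1 : (volume : Measure (EuclideanSpace ℝ (Fin 3))).real (ball 0 1) = π * 4 / 3 := by
    rw [Measure.real, EuclideanSpace.volume_ball_fin_three]
    simp [ENNReal.toReal_mul, pi_pos.le]
    positivity
  have hb2 : (volume : Measure (EuclideanSpace ℝ (Fin 3))).real (closedBall 0 (2 * R)) = (2 * R) ^ 3 * (π * 4 / 3) := by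
    rw [Measure.real, EuclideanSpace.volume_closedBall_fin_three, ENNReal.toReal_mul,
      ENNReal.toReal_pow, ENNReal.toReal_ofReal (by linarith), ENNReal.toReal_ofReal (by positivity)]
  have hHv : ∫ x, H x = (2 * R) ^ 3 * (π * 4 / 3) * Real.exp (-a * δ) := by
    rw [hH, integral_indicator measurableSet_closedBall, setIntegral_const, hb2, smul_eq_mul]
  have hle : ∫ x in (Θ δ)ᶜ, Real.exp (-a * infDist x S) ≤ ∫ x, (H x + G ‖x‖) := by
    refine le_trans (integral_mono_of_nonneg (g := fun x => H x + G ‖x‖)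
      (Filter.Eventually.of_forall fun x => (Real.exp_pos _).le)
      (hHi.add hGi).integrableOn ?_) (setIntegral_le_integral (hHi.add hGi)
        (Filter.Eventually.of_forall fun x => add_nonneg (hHn _) (hGn _)))
    refine ae_restrict_of_forall_mem hmeas fun x hx => ?_
    by_cases hx2 : ‖x‖ ≤ 2 * R
    · have h1 : H x = Real.exp (-a * δ) :=
        Set.indicator_of_mem (by simpa using hx2) _
      have h2 : δ ≤ infDist x S := by simpa [hΘ] using hx
      have h3 := hGn ‖x‖
      have h4 : Real.exp (-a * infDist x S) ≤ Real.exp (-a * δ) :=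
        Real.exp_le_exp.2 (by nlinarith)
      show _ ≤ H x + G ‖x‖
      linarith
    · have h1 : G ‖x‖ = Real.exp (-a * (‖x‖ - R)) :=
        Set.indicator_of_mem (by simpa using hx2) _
      have h3 := hHn x
      have h4 : Real.exp (-a * infDist x S) ≤ Real.exp (-a * (‖x‖ - R)) :=
        Real.exp_le_exp.2 (by nlinarith [hdist x])
      show _ ≤ H x + G ‖x‖
      linarith
  refine hle.trans ?_
  rw [integral_add hHi hGi, hGv, hHv, hb1]
  have e1 : -a * (2 * R - R) = -a * R := by ring
  rw [e1]
  have key : (2 * R) ^ 2 / a + 2 * (2 * R) / a ^ 2 + 2 / a ^ 3 ≤ 8 / 3 * R ^ 3 := by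
    have k1 : 4 / a + 4 / a ^ 2 + 2 / a ^ 3 ≤ 8 / 3 := by
      rw [show 4 / a + 4 / a ^ 2 + 2 / a ^ 3 = (4 * a ^ 2 + 4 * a + 2) / a ^ 3 by field_simp,
        div_le_iff₀ (by positivity)]
      nlinarith
    have r2 : R ^ 2 ≤ R ^ 3 := pow_le_pow_right₀ hR.le (by norm_num)
    have r1 : R ≤ R ^ 3 := le_self_pow₀ hR.le (by norm_num)
    have r0 : 1 ≤ R ^ 3 := one_le_pow₀ hR.le
    calc (2 * R) ^ 2 / a + 2 * (2 * R) / a ^ 2 + 2 / a ^ 3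
        = 4 / a * R ^ 2 + 4 / a ^ 2 * R + 2 / a ^ 3 * 1 := by ring
      _ ≤ 4 / a * R ^ 3 + 4 / a ^ 2 * R ^ 3 + 2 / a ^ 3 * R ^ 3 := by gcongr
      _ = (4 / a + 4 / a ^ 2 + 2 / a ^ 3) * R ^ 3 := by ring
      _ ≤ _ := by gcongr
  have k2 := mul_le_mul_of_nonneg_left key (by positivity : 0 ≤ 4 * π * Real.exp (-a * R))
  simp only [nsmul_eq_mul, smul_eq_mul]
  push_cast
  linarith
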